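/- arXiv:2412.03444 — 2 statements merged into one kernel-verified Lean document; each statement's English description precedes it below -/
import Mathlib

section
/- Let ρ and σ be positive definite d×d density matrices, let α ∈ (0,1) and z ∈ (0,∞). Then the maximum of F_{α,z}(ρ, UσU*) over all d×d unitary matrices U equals F_α^C(λ↓(ρ), λ↓(σ)), and this maximum is attained by some unitary U. -/
open Matrix
open scoped ComplexOrder

/-- Real power of a (Hermitian) matrix via functional calculus on eigenvalues,
with `(0:ℝ) ^ t = 0` for `t ≠ 0`. Returns `0` on non-Hermitian input. -/
noncomputable def mpow {d : ℕ} (A : Matrix (Fin d) (Fin d) ℂ) (t : ℝ) :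
    Matrix (Fin d) (Fin d) ℂ :=
  if hA : A.IsHermitian then
    (hA.eigenvectorUnitary : Matrix (Fin d) (Fin d) ℂ) *
      Matrix.diagonal (fun i => ((hA.eigenvalues i ^ t : ℝ) : ℂ)) *
      (star (hA.eigenvectorUnitary : Matrix (Fin d) (Fin d) ℂ))
  else 0

/-- The quantum α-z-fidelity
`F_{α,z}(ρ,σ) = (Tr[(σ^{(1-α)/(2z)} ρ^{α/z} σ^{(1-α)/(2z)})^z])^{1/α}`. -/
noncomputable def Faz {d : ℕ} (ρ σ : Matrix (Fin d) (Fin d) ℂ) (α z : ℝ) : ℝ :=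
  ((mpow (mpow σ ((1 - α) / (2 * z)) * mpow ρ (α / z) * mpow σ ((1 - α) / (2 * z))) z).trace.re)
    ^ (1 / α)

/-- The classical α-fidelity `F_α^C(p,q) = (Σ_i p_i^α q_i^{1-α})^{1/α}`. -/
noncomputable def FazC {d : ℕ} (p q : Fin d → ℝ) (α : ℝ) : ℝ :=
  (∑ i, p i ^ α * q i ^ (1 - α)) ^ (1 / α)

/-- The vector `p` rearranged in increasing order. -/
noncomputable def sortUp {d : ℕ} (p : Fin d → ℝ) : Fin d → ℝ :=
  p ∘ Tuple.sort p

/-- The vector `p` rearranged in decreasing order. -/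
noncomputable def sortDown {d : ℕ} (p : Fin d → ℝ) : Fin d → ℝ :=
  fun i => sortUp p i.rev

/-- `λ↑(A)`: the eigenvalues of a Hermitian matrix in increasing order. -/
noncomputable def eigUp {d : ℕ} {A : Matrix (Fin d) (Fin d) ℂ} (hA : A.IsHermitian) :
    Fin d → ℝ := sortUp hA.eigenvalues

/-- `λ↓(A)`: the eigenvalues of a Hermitian matrix in decreasing order. -/
noncomputable def eigDown {d : ℕ} {A : Matrix (Fin d) (Fin d) ℂ} (hA : A.IsHermitian) :
    Fin d → ℝ := sortDown hA.eigenvalues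


lemma one_le_det_one_add {n : Type*} [Fintype n] [DecidableEq n] {N : Matrix n n ℂ}
    (hN : N.PosSemidef) : 1 ≤ (1 + N).det := by
  have h := hN.1.spectral_theorem
  rw [Unitary.conjStarAlgAut_apply] at h
  set V : Matrix n n ℂ := (hN.1.eigenvectorUnitary : Matrix n n ℂ) with hV
  have hVV : V * star V = 1 := Unitary.mul_star_self_of_mem hN.1.eigenvectorUnitary.2
  have h2 : 1 + N = V * diagonal (fun i => 1 + (hN.1.eigenvalues i : ℂ)) * star V := by
    have : (diagonal (fun i => 1 + (hN.1.eigenvalues i : ℂ)) : Matrix n n ℂ)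
        = 1 + diagonal (RCLike.ofReal ∘ hN.1.eigenvalues) := by
      rw [← diagonal_one, diagonal_add]; rfl
    rw [this, Matrix.mul_add, Matrix.add_mul, Matrix.mul_one, hVV, ← h]
  have hd : V.det * (star V).det = 1 := by rw [← det_mul, hVV, det_one]
  rw [h2, det_mul, det_mul, det_diagonal, mul_right_comm, hd, one_mul]
  have : (∏ i, (1 + (hN.1.eigenvalues i : ℂ))) = ((∏ i, (1 + hN.1.eigenvalues i) : ℝ) : ℂ) := by
    push_cast; rfl
  rw [this]
  have h3 : (1:ℝ) ≤ ∏ i, (1 + hN.1.eigenvalues i) :=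
    Finset.prod_induction _ (fun x => (1:ℝ) ≤ x) (fun _ _ => one_le_mul_of_one_le_of_one_le) le_rfl
      (fun i _ => by have := hN.eigenvalues_nonneg i; linarith)
  exact_mod_cast h3

lemma det_le_det_add {n : Type*} [Fintype n] [DecidableEq n] {S N : Matrix n n ℂ}
    (hS : S.PosDef) (hN : N.PosSemidef) : S.det ≤ (S + N).det := by
  obtain ⟨C, rfl⟩ : ∃ C : Matrix n n ℂ, N = Cᴴ * C := by
    open scoped MatrixOrder in
    exact (CStarAlgebra.nonneg_iff_eq_star_mul_self).1 hN.nonneg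
  rw [det_add_mul _ _ hS.det_pos.ne'.isUnit]
  have h := one_le_det_one_add (hS.inv.posSemidef.mul_mul_conjTranspose_same C)
  exact le_mul_of_one_le_right hS.det_pos.le h

lemma proj_compl {d k : ℕ} (Y : Matrix (Fin d) (Fin k) ℂ) (hY : (Yᴴ * Y).PosDef) :
    (1 - Y * (Yᴴ * Y)⁻¹ * Yᴴ).PosSemidef := by
  have hG := hY.1.inv
  set G := Yᴴ * Y with hGd
  have hu : IsUnit G.det := hY.det_pos.ne'.isUnit
  have hH : (1 - Y * G⁻¹ * Yᴴ)ᴴ = 1 - Y * G⁻¹ * Yᴴ := by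
    simp [conjTranspose_sub, conjTranspose_mul, hG.eq, Matrix.mul_assoc]
  have : (1 - Y * G⁻¹ * Yᴴ) = (1 - Y * G⁻¹ * Yᴴ)ᴴ * (1 - Y * G⁻¹ * Yᴴ) := by
    rw [hH]
    have : Y * G⁻¹ * Yᴴ * (Y * G⁻¹ * Yᴴ) = Y * G⁻¹ * Yᴴ := by
      calc _ = Y * (G⁻¹ * G) * (G⁻¹ * Yᴴ) := by rw [hGd]; simp only [Matrix.mul_assoc]
        _ = _ := by rw [nonsing_inv_mul _ hu, Matrix.mul_one, Matrix.mul_assoc]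
    rw [Matrix.mul_sub, Matrix.sub_mul _ _ (Y * G⁻¹ * Yᴴ), this]; simp
  rw [this]
  exact posSemidef_conjTranspose_mul_self _

lemma prod_max {d n : ℕ} (h : n + 1 ≤ d) (a : Fin d → ℝ) (ha : ∀ i, 0 < a i) (hanti : Antitone a) :
    a (Fin.castLE h (Fin.last n)) ^ (n + 1) *
      ∏ i, (1 + max (a i / a (Fin.castLE h (Fin.last n)) - 1) 0) =
    ∏ j : Fin (n + 1), a (Fin.castLE h j) := by
  set c := a (Fin.castLE h (Fin.last n)) with hc
  have hc0 : 0 < c := ha _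
  obtain ⟨m, rfl⟩ := Nat.exists_eq_add_of_le h
  rw [Fin.prod_univ_add]
  have h1 : ∀ i : Fin m, 1 + max (a (Fin.natAdd (n+1) i) / c - 1) 0 = 1 := by
    intro i
    have : a (Fin.natAdd (n+1) i) ≤ c := hanti (by simp [Fin.le_def]; omega)
    rw [max_eq_right, add_zero]
    rw [sub_nonpos, div_le_one hc0]; exact this
  have h2 : ∀ i : Fin (n+1), 1 + max (a (Fin.castAdd m i) / c - 1) 0 = a (Fin.castAdd m i) / c := by
    intro i
    have : c ≤ a (Fin.castAdd m i) := hanti (by simp [Fin.le_def]; omega)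
    rw [max_eq_left]
    · ring
    rw [sub_nonneg, one_le_div hc0]; exact this
  simp only [h1, h2, Finset.prod_const_one, mul_one, Finset.prod_div_distrib, Finset.prod_const,
    Finset.card_univ, Fintype.card_fin]
  rw [mul_div_cancel₀]
  · rfl
  · positivity

lemma det_compress_le {d k : ℕ} (h : k ≤ d) (a : Fin d → ℝ) (ha : ∀ i, 0 < a i)
    (hanti : Antitone a) (Y : Matrix (Fin d) (Fin k) ℂ) (hY : (Yᴴ * Y).PosDef)
    (hY' : (Yᴴ * diagonal (fun i => (a i : ℂ)) * Y).PosDef) :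
    (Yᴴ * diagonal (fun i => (a i : ℂ)) * Y).det ≤
      ((∏ j : Fin k, a (Fin.castLE h j) : ℝ) : ℂ) * (Yᴴ * Y).det := by
  cases k with
  | zero => simp
  | succ n =>
  have hpm := prod_max h a ha hanti
  set c := a (Fin.castLE h (Fin.last n)) with hc
  have hc0 : 0 < c := ha _
  let t : Fin d → ℝ := fun i => max (a i / c - 1) 0
  have ht : ∀ i, 0 ≤ t i := fun i => le_max_right _ _
  let S : Matrix (Fin d) (Fin d) ℂ := diagonal (fun i => ((Real.sqrt (t i) : ℝ) : ℂ))
  have hSH : Sᴴ = S := by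
    simp only [S, diagonal_conjTranspose]; congr 1; ext i; simp
  have hSS : S * S = diagonal (fun i => (t i : ℂ)) := by
    simp only [S, diagonal_mul_diagonal]; congr 1; ext i
    rw [← Complex.ofReal_mul, Real.mul_self_sqrt (ht i)]
  -- step 1
  have h1 : (Yᴴ * diagonal (fun i => (a i : ℂ)) * Y).det ≤
      ((c : ℂ) • (Yᴴ * Y + (Yᴴ * S) * (S * Y))).det := by
    have e : (c : ℂ) • (Yᴴ * Y + (Yᴴ * S) * (S * Y)) =
        Yᴴ * diagonal (fun i => (a i : ℂ)) * Y +
        Yᴴ * diagonal (fun i => ((c * (1 + t i) - a i : ℝ) : ℂ)) * Y := by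
      have e1 : (Yᴴ * S) * (S * Y) = Yᴴ * (S * S) * Y := by simp only [Matrix.mul_assoc]
      have e2 : Yᴴ * Y = Yᴴ * (1 : Matrix (Fin d) (Fin d) ℂ) * Y := by simp
      rw [e1, e2, ← Matrix.add_mul, ← Matrix.mul_add, ← Matrix.add_mul, ← Matrix.mul_add, hSS,
        ← Matrix.smul_mul, ← Matrix.mul_smul, ← diagonal_one, diagonal_add, diagonal_add, ← diagonal_smul]
      congr 3; ext i; simp
    rw [e]
    refine det_le_det_add hY' (PosSemidef.conjTranspose_mul_mul_same (PosSemidef.diagonal ?_) Y)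
    intro i
    have : 0 ≤ c * (1 + t i) - a i := by
      have : a i / c - 1 ≤ t i := le_max_left _ _
      have : a i / c ≤ 1 + t i := by linarith
      rw [div_le_iff₀ hc0] at this
      linarith
    simpa only [Pi.zero_apply, Complex.zero_le_real] using this
  refine h1.trans ?_
  rw [det_smul, det_add_mul _ _ hY.det_pos.ne'.isUnit, Fintype.card_fin, ← hpm]
  have h2 : (1 + S * Y * (Yᴴ * Y)⁻¹ * (Yᴴ * S)).det ≤ ((∏ i, (1 + t i) : ℝ) : ℂ) := by
    have e3 : ((∏ i, (1 + t i) : ℝ) : ℂ) = (1 + S * S).det := by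
      rw [hSS, ← diagonal_one, diagonal_add, det_diagonal]; push_cast; rfl
    have e4 : 1 + S * S = (1 + S * Y * (Yᴴ * Y)⁻¹ * (Yᴴ * S)) +
        Sᴴ * (1 - Y * (Yᴴ * Y)⁻¹ * Yᴴ) * S := by
      rw [hSH, Matrix.mul_sub, Matrix.sub_mul]
      simp only [Matrix.mul_assoc, Matrix.mul_one, Matrix.one_mul]
      abel
    rw [e3, e4]
    refine det_le_det_add (PosDef.one.add_posSemidef ?_)
      ((proj_compl Y hY).conjTranspose_mul_mul_same S)
    have := hY.inv.posSemidef.conjTranspose_mul_mul_same (Yᴴ * S)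
    simpa [conjTranspose_mul, hSH] using this
  have h3 : (0:ℂ) ≤ (c : ℂ) ^ (n+1) * (Yᴴ * Y).det :=
    mul_nonneg (pow_nonneg (Complex.zero_le_real.2 hc0.le) _) hY.det_pos.le
  calc _ = ((c : ℂ) ^ (n+1) * (Yᴴ * Y).det) * (1 + S * Y * (Yᴴ * Y)⁻¹ * (Yᴴ * S)).det := by ring
    _ ≤ ((c : ℂ) ^ (n+1) * (Yᴴ * Y).det) * ((∏ i, (1 + t i) : ℝ) : ℂ) :=
      mul_le_mul_of_nonneg_left h2 h3
    _ = _ := by push_cast; ring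

lemma abel_nonneg : ∀ {d : ℕ} (w δ : Fin d → ℝ), Antitone w → (∀ i, 0 ≤ w i) →
    (∀ k (h : k ≤ d), 0 ≤ ∑ j : Fin k, δ (Fin.castLE h j)) → 0 ≤ ∑ i, w i * δ i := by
  intro d
  induction d with
  | zero => intros; simp
  | succ n ih =>
    intro w δ hw hw0 hδ
    have h1 := ih (fun i => w i.castSucc - w (Fin.last n)) (fun i => δ i.castSucc)
      (fun i j hij => by
        have := hw (Fin.castSucc_le_castSucc_iff.2 hij)
        simp only; linarith)
      (fun i => sub_nonneg.2 (hw (Fin.le_last _)))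
      (fun k h => hδ k (h.trans (Nat.le_succ n)))
    have h2 : 0 ≤ ∑ j, δ j := hδ (n+1) le_rfl
    have h3 := mul_nonneg (hw0 (Fin.last n)) h2
    rw [Fin.sum_univ_castSucc] at h3 ⊢
    simp only [sub_mul, Finset.sum_sub_distrib, ← Finset.mul_sum] at h1
    linarith

lemma sum_rpow_le {d : ℕ} (m x : Fin d → ℝ) (hm : ∀ i, 0 < m i) (hx : ∀ i, 0 < x i)
    (hanti : Antitone m)
    (h : ∀ k (h : k ≤ d), ∏ j : Fin k, m (Fin.castLE h j) ≤ ∏ j : Fin k, x (Fin.castLE h j))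
    {z : ℝ} (hz : 0 < z) : ∑ i, m i ^ z ≤ ∑ i, x i ^ z := by
  have h1 := abel_nonneg (fun i => m i ^ z) (fun i => Real.log (x i) - Real.log (m i))
    (fun i j hij => Real.rpow_le_rpow (hm _).le (hanti hij) hz.le)
    (fun i => (Real.rpow_pos_of_pos (hm i) z).le)
    (fun k hk => by
      rw [Finset.sum_sub_distrib, ← Real.log_prod (fun i _ => (hx _).ne'),
        ← Real.log_prod (fun i _ => (hm _).ne'), sub_nonneg]
      exact Real.log_le_log (Finset.prod_pos fun i _ => hm _) (h k hk))
  have h2 : ∀ i, m i ^ z + z * (m i ^ z * (Real.log (x i) - Real.log (m i))) ≤ x i ^ z := by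
    intro i
    have e : x i ^ z = m i ^ z * Real.exp (z * (Real.log (x i) - Real.log (m i))) := by
      rw [Real.rpow_def_of_pos (hx i), Real.rpow_def_of_pos (hm i), ← Real.exp_add]
      congr 1; ring
    rw [e]
    have := Real.add_one_le_exp (z * (Real.log (x i) - Real.log (m i)))
    nlinarith [Real.rpow_pos_of_pos (hm i) z]
  have h3 := Finset.sum_le_sum (fun i (_ : i ∈ Finset.univ) => h2 i)
  rw [Finset.sum_add_distrib, ← Finset.mul_sum] at h3
  have := mul_nonneg hz.le h1
  linarith

lemma exists_decomp {d : ℕ} {A : Matrix (Fin d) (Fin d) ℂ} (hA : A.IsHermitian) :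
    ∃ P ∈ unitaryGroup (Fin d) ℂ,
      A = P * diagonal (fun i => (eigDown hA i : ℂ)) * star P := by
  have h := hA.spectral_theorem
  rw [Unitary.conjStarAlgAut_apply] at h
  set V : Matrix (Fin d) (Fin d) ℂ := (hA.eigenvectorUnitary : Matrix (Fin d) (Fin d) ℂ) with hV
  have hVV : V * star V = 1 := Unitary.mul_star_self_of_mem hA.eigenvectorUnitary.2
  let e : Fin d ≃ Fin d := Fin.revPerm.trans (Tuple.sort hA.eigenvalues)
  have he : (fun i => (eigDown hA i : ℂ)) = (RCLike.ofReal ∘ hA.eigenvalues) ∘ e := by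
    ext i; rfl
  refine ⟨V.submatrix id e, ?_, ?_⟩
  · rw [mem_unitaryGroup_iff, star_eq_conjTranspose, conjTranspose_submatrix, submatrix_mul_equiv]
    rw [← star_eq_conjTranspose, hVV]; simp
  · rw [he, ← submatrix_diagonal_equiv, submatrix_mul_equiv, star_eq_conjTranspose,
      conjTranspose_submatrix, submatrix_mul_equiv, ← star_eq_conjTranspose]
    rw [submatrix_id_id]; exact h

lemma eigDown_antitone {d : ℕ} {A : Matrix (Fin d) (Fin d) ℂ} (hA : A.IsHermitian) :
    Antitone (eigDown hA) := fun i j hij =>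
  Tuple.monotone_sort hA.eigenvalues (Fin.rev_le_rev.2 hij)

lemma eigDown_pos {d : ℕ} {A : Matrix (Fin d) (Fin d) ℂ} (hA : A.PosDef) (i : Fin d) :
    0 < eigDown hA.1 i := hA.eigenvalues_pos _

lemma mpow_conj {d : ℕ} (U : Matrix (Fin d) (Fin d) ℂ) (hU : U ∈ unitaryGroup (Fin d) ℂ)
    (a : Fin d → ℝ) (t : ℝ) :
    mpow (U * diagonal (fun i => (a i : ℂ)) * star U) t =
      U * diagonal (fun i => ((a i ^ t : ℝ) : ℂ)) * star U := by
  have hH : (U * diagonal (fun i => (a i : ℂ)) * star U).IsHermitian := by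
    rw [star_eq_conjTranspose]
    apply isHermitian_mul_mul_conjTranspose
    rw [isHermitian_diagonal_iff]
    intro i; simp [IsSelfAdjoint]
  unfold mpow
  rw [dif_pos hH]
  have h := hH.spectral_theorem
  rw [Unitary.conjStarAlgAut_apply] at h
  set V : Matrix (Fin d) (Fin d) ℂ := (hH.eigenvectorUnitary : Matrix (Fin d) (Fin d) ℂ) with hV
  have hVV : V * star V = 1 := Unitary.mul_star_self_of_mem hH.eigenvectorUnitary.2
  have hVV' : star V * V = 1 := Unitary.star_mul_self_of_mem hH.eigenvectorUnitary.2
  have hUU : U * star U = 1 := Unitary.mul_star_self_of_mem hU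
  have hUU' : star U * U = 1 := Unitary.star_mul_self_of_mem hU
  set l := hH.eigenvalues with hl
  have key : star V * U * diagonal (fun i => (a i : ℂ)) =
      diagonal (RCLike.ofReal ∘ l) * (star V * U) := by
    calc _ = star V * (U * diagonal (fun i => (a i : ℂ)) * star U) * U := by
          simp only [Matrix.mul_assoc, hUU', Matrix.mul_one]
      _ = star V * (V * diagonal (RCLike.ofReal ∘ l) * star V) * U := by rw [← h]
      _ = (star V * V) * diagonal (RCLike.ofReal ∘ l) * (star V * U) := by
          simp only [Matrix.mul_assoc]
      _ = _ := by rw [hVV', Matrix.one_mul]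
  have key2 : diagonal (fun i => ((l i ^ t : ℝ) : ℂ)) * (star V * U) =
      star V * U * diagonal (fun i => ((a i ^ t : ℝ) : ℂ)) := by
    ext i j
    have := congrFun (congrFun key i) j
    rw [mul_diagonal, diagonal_mul] at this
    rw [mul_diagonal, diagonal_mul]
    by_cases hz : (star V * U) i j = 0
    · simp [hz]
    · have h1 : (a j : ℂ) = (l i : ℂ) := by
        rw [mul_comm] at this
        exact mul_right_cancel₀ hz this
      have h2 : a j = l i := by exact_mod_cast h1
      rw [h2, mul_comm]
  calc _ = V * diagonal (fun i => ((l i ^ t : ℝ) : ℂ)) * star V * (U * star U) := by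
        rw [hUU, Matrix.mul_one]
    _ = V * (diagonal (fun i => ((l i ^ t : ℝ) : ℂ)) * (star V * U)) * star U := by
        simp only [Matrix.mul_assoc]
    _ = (V * star V) * U * diagonal (fun i => ((a i ^ t : ℝ) : ℂ)) * star U := by
        rw [key2]; simp only [Matrix.mul_assoc]
    _ = _ := by rw [hVV, Matrix.one_mul]

lemma trace_conj {d : ℕ} (U : Matrix (Fin d) (Fin d) ℂ) (hU : U ∈ unitaryGroup (Fin d) ℂ)
    (a : Fin d → ℝ) :
    (U * diagonal (fun i => (a i : ℂ)) * star U).trace.re = ∑ i, a i := by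
  have hUU' : star U * U = 1 := Unitary.star_mul_self_of_mem hU
  rw [trace_mul_cycle, hUU', Matrix.one_mul, trace_diagonal]
  simp

lemma prod_le {d k : ℕ} (h : k ≤ d) (a b m : Fin d → ℝ) (ha : ∀ i, 0 < a i) (hb : ∀ i, 0 < b i)
    (hm : ∀ i, 0 < m i) (haa : Antitone a) (hba : Antitone b)
    (P Q R : Matrix (Fin d) (Fin d) ℂ) (hP : P ∈ unitaryGroup (Fin d) ℂ)
    (hQ : Q ∈ unitaryGroup (Fin d) ℂ) (hR : R ∈ unitaryGroup (Fin d) ℂ)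
    (hM : (Q * diagonal (fun i => (b i : ℂ)) * star Q) * (P * diagonal (fun i => (a i : ℂ)) * star P)
      * (Q * diagonal (fun i => (b i : ℂ)) * star Q) = R * diagonal (fun i => (m i : ℂ)) * star R) :
    ∏ j : Fin k, m (Fin.castLE h j) ≤
      ∏ j : Fin k, (a (Fin.castLE h j) * (b (Fin.castLE h j) * b (Fin.castLE h j))) := by
  have hPP : P * Pᴴ = 1 := Unitary.mul_star_self_of_mem hP
  have hQQ : Q * Qᴴ = 1 := Unitary.mul_star_self_of_mem hQ
  have hQQ' : Qᴴ * Q = 1 := Unitary.star_mul_self_of_mem hQ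
  have hRR' : Rᴴ * R = 1 := Unitary.star_mul_self_of_mem hR
  simp only [star_eq_conjTranspose] at hM
  let E : Matrix (Fin d) (Fin k) ℂ := (1 : Matrix (Fin d) (Fin d) ℂ).submatrix id (Fin.castLE h)
  have hE : ∀ f : Fin d → ℂ, Eᴴ * diagonal f * E = diagonal (f ∘ Fin.castLE h) := by
    intro f
    ext i j
    simp only [E, conjTranspose_submatrix, conjTranspose_one, mul_apply, mul_diagonal,
      submatrix_apply, id, one_apply, diagonal_apply]
    simp [Finset.sum_ite_eq, ite_mul, eq_comm]
    split_ifs with hij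
    · rw [hij]
    · rfl
  have hEE : Eᴴ * E = 1 := by
    have := hE 1
    rw [show (diagonal (1 : Fin d → ℂ)) = 1 from diagonal_one, Matrix.mul_one] at this
    rw [this]; exact diagonal_one
  have hbd : (diagonal (fun i => (b i : ℂ)))ᴴ = diagonal (fun i => (b i : ℂ)) := by
    rw [diagonal_conjTranspose]; congr 1; ext i; simp
  set Db : Matrix (Fin d) (Fin d) ℂ := diagonal (fun i => (b i : ℂ)) with hDb
  set Da : Matrix (Fin d) (Fin d) ℂ := diagonal (fun i => (a i : ℂ)) with hDa
  set Dm : Matrix (Fin d) (Fin d) ℂ := diagonal (fun i => (m i : ℂ)) with hDm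
  have hDbb : diagonal (fun i => ((b i * b i : ℝ) : ℂ)) = Db * Db := by
    rw [hDb, diagonal_mul_diagonal]; push_cast; rfl
  let Y2 : Matrix (Fin d) (Fin k) ℂ := Qᴴ * (R * E)
  let Y1 : Matrix (Fin d) (Fin k) ℂ := Pᴴ * ((Q * Db * Qᴴ) * (R * E))
  have f1 : Y2ᴴ * Y2 = 1 := by
    calc _ = Eᴴ * (Rᴴ * (Q * Qᴴ) * R) * E := by
          simp only [Y2, conjTranspose_mul, conjTranspose_conjTranspose, Matrix.mul_assoc]
      _ = 1 := by rw [hQQ, Matrix.mul_one, hRR', Matrix.mul_one, hEE]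
  have f2 : Y1ᴴ * Y1 = Y2ᴴ * (Db * Db) * Y2 := by
    calc _ = Eᴴ * Rᴴ * Q * Db * Qᴴ * (P * Pᴴ) * Q * Db * Qᴴ * R * E := by
          simp only [Y1, conjTranspose_mul, conjTranspose_conjTranspose, Matrix.mul_assoc, hbd]
      _ = Eᴴ * Rᴴ * Q * Db * (Qᴴ * Q) * Db * Qᴴ * R * E := by
          rw [hPP]; simp only [Matrix.mul_assoc, Matrix.one_mul]
      _ = _ := by
          rw [hQQ']; simp only [Y2, conjTranspose_mul, conjTranspose_conjTranspose,
            Matrix.mul_assoc, Matrix.one_mul]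
  have f3 : Y1ᴴ * Da * Y1 = Eᴴ * Dm * E := by
    calc _ = Eᴴ * Rᴴ * ((Q * Db * Qᴴ) * (P * Da * Pᴴ) * (Q * Db * Qᴴ)) * (R * E) := by
          simp only [Y1, conjTranspose_mul, conjTranspose_conjTranspose, Matrix.mul_assoc, hbd]
      _ = Eᴴ * (Rᴴ * R) * Dm * (Rᴴ * R) * E := by
          rw [hM]; simp only [Matrix.mul_assoc]
      _ = _ := by rw [hRR']; simp only [Matrix.mul_one]
  have inj : Function.Injective Y2.mulVec := by
    intro x y hxy
    have := congrArg (fun v => Y2ᴴ *ᵥ v) hxy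
    simpa [mulVec_mulVec, f1] using this
  have g1 : (Y2ᴴ * diagonal (fun i => ((b i * b i : ℝ) : ℂ)) * Y2).PosDef := by
    refine PosDef.conjTranspose_mul_mul_same (PosDef.diagonal ?_) inj
    intro i
    exact Complex.zero_lt_real.2 (mul_pos (hb i) (hb i))
  have k2 := det_compress_le h (fun i => b i * b i) (fun i => mul_pos (hb i) (hb i))
    (fun i j hij => mul_le_mul (hba hij) (hba hij) (hb _).le (hb _).le) Y2
    (by rw [f1]; exact PosDef.one) g1
  have k1 := det_compress_le h a ha haa Y1 (by rw [f2, ← hDbb]; exact g1) (by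
    rw [← hDa, f3, hE]
    refine PosDef.diagonal ?_
    intro i
    exact Complex.zero_lt_real.2 (hm _))
  rw [← hDa, f3, hE, f2, ← hDbb, det_diagonal] at k1
  rw [f1, det_one, mul_one] at k2
  have pa : (0:ℂ) ≤ ((∏ j : Fin k, a (Fin.castLE h j) : ℝ) : ℂ) :=
    Complex.zero_le_real.2 (Finset.prod_nonneg fun i _ => (ha _).le)
  have k3 := k1.trans (mul_le_mul_of_nonneg_left k2 pa)
  rw [← Complex.ofReal_mul, ← Finset.prod_mul_distrib] at k3
  have e : (∏ i, ((fun i => (m i : ℂ)) ∘ Fin.castLE h) i) =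
      ((∏ j : Fin k, m (Fin.castLE h j) : ℝ) : ℂ) := by push_cast; rfl
  rw [e] at k3
  exact Complex.real_le_real.1 k3

/-- for positive definite density matrices `ρ, σ`, `α ∈ (0,1)` and `z ∈ (0,∞)`,
the maximum of `F_{α,z}(ρ, UσU*)` over unitaries `U` is `F_α^C(λ↓(ρ), λ↓(σ))`, attained. -/
theorem stmt_0 {d : ℕ} (ρ σ : Matrix (Fin d) (Fin d) ℂ)
    (hρ : ρ.PosDef) (hσ : σ.PosDef) (hρ1 : ρ.trace = 1) (hσ1 : σ.trace = 1)
    (α z : ℝ) (hα : α ∈ Set.Ioo (0 : ℝ) 1) (hz : 0 < z) :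
    IsGreatest {x : ℝ | ∃ U ∈ Matrix.unitaryGroup (Fin d) ℂ,
        x = Faz ρ (U * σ * star U) α z}
      (FazC (eigDown hρ.1) (eigDown hσ.1) α) := by
  obtain ⟨hα0, hα1⟩ := hα
  obtain ⟨P, hP, hPe⟩ := exists_decomp hρ.1
  obtain ⟨Q, hQ, hQe⟩ := exists_decomp hσ.1
  have hp := eigDown_pos hρ
  have hq := eigDown_pos hσ
  have hpa := eigDown_antitone hρ.1
  have hqa := eigDown_antitone hσ.1
  set p := eigDown hρ.1 with hpdef
  set q := eigDown hσ.1 with hqdef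
  have hb0 : 0 ≤ (1 - α) / (2 * z) := div_nonneg (by linarith) (by linarith)
  have ha0 : 0 ≤ α / z := by positivity
  have key : ∀ i, (p i ^ (α / z) * (q i ^ ((1 - α) / (2 * z)) * q i ^ ((1 - α) / (2 * z)))) ^ z =
      p i ^ α * q i ^ (1 - α) := by
    intro i
    rw [← Real.rpow_add (hq i), Real.mul_rpow (Real.rpow_pos_of_pos (hp i) _).le
      (Real.rpow_pos_of_pos (hq i) _).le, ← Real.rpow_mul (hp i).le, ← Real.rpow_mul (hq i).le]
    congr 2
    · field_simp
    · field_simp; ring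
  have hUσ : ∀ U ∈ unitaryGroup (Fin d) ℂ, ∀ t, mpow (U * σ * star U) t =
      (U * Q) * diagonal (fun i => ((q i ^ t : ℝ) : ℂ)) * star (U * Q) := by
    intro U hU t
    rw [← mpow_conj _ (mul_mem hU hQ)]
    congr 1
    conv_lhs => rw [hQe]
    simp only [star_mul, Matrix.mul_assoc]
  have hρt : ∀ t, mpow ρ t = P * diagonal (fun i => ((p i ^ t : ℝ) : ℂ)) * star P := by
    intro t
    conv_lhs => rw [hPe]
    exact mpow_conj _ hP _ _
  constructor
  · refine ⟨P * star Q, mul_mem hP (Unitary.star_mem hQ), ?_⟩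
    unfold Faz FazC
    have hU : P * star Q * Q = P := by
      rw [Matrix.mul_assoc, Unitary.star_mul_self_of_mem hQ, Matrix.mul_one]
    have hPP' : star P * P = 1 := Unitary.star_mul_self_of_mem hP
    rw [hUσ _ (mul_mem hP (Unitary.star_mem hQ)), hρt, hU]
    have e : ∀ (A B C : Matrix (Fin d) (Fin d) ℂ), (P * A * star P) * (P * B * star P) * (P * C * star P)
        = P * (A * B * C) * star P := by
      intro A B C
      calc _ = P * A * (star P * P) * B * (star P * P) * C * star P := by
            simp only [Matrix.mul_assoc]
        _ = _ := by rw [hPP']; simp only [Matrix.mul_assoc, Matrix.one_mul]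
    rw [e, diagonal_mul_diagonal, diagonal_mul_diagonal]
    have e2 : (fun i => ((q i ^ ((1 - α) / (2 * z)) : ℝ) : ℂ) * ((p i ^ (α / z) : ℝ) : ℂ) *
        ((q i ^ ((1 - α) / (2 * z)) : ℝ) : ℂ)) = fun i =>
        ((p i ^ (α / z) * (q i ^ ((1 - α) / (2 * z)) * q i ^ ((1 - α) / (2 * z))) : ℝ) : ℂ) := by
      ext i; push_cast; ring
    rw [e2, mpow_conj _ hP, trace_conj _ hP]
    simp only [key]
  · rintro x ⟨U, hU, rfl⟩
    unfold Faz FazC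
    rw [hUσ U hU, hρt]
    have hW := mul_mem hU hQ
    set W := U * Q with hWdef
    set a : Fin d → ℝ := fun i => p i ^ (α / z) with hadef
    set b : Fin d → ℝ := fun i => q i ^ ((1 - α) / (2 * z)) with hbdef
    have ha : ∀ i, 0 < a i := fun i => Real.rpow_pos_of_pos (hp i) _
    have hb : ∀ i, 0 < b i := fun i => Real.rpow_pos_of_pos (hq i) _
    have haa : Antitone a := fun i j hij => Real.rpow_le_rpow (hp _).le (hpa hij) ha0
    have hba : Antitone b := fun i j hij => Real.rpow_le_rpow (hq _).le (hqa hij) hb0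
    have hpd : ∀ (V : Matrix (Fin d) (Fin d) ℂ) (_ : V ∈ unitaryGroup (Fin d) ℂ) (c : Fin d → ℝ)
        (_ : ∀ i, 0 < c i), (V * diagonal (fun i => (c i : ℂ)) * star V).PosDef := by
      intro V hV c hc
      have hVu : IsUnit V := ⟨⟨V, star V, Unitary.mul_star_self_of_mem hV,
        Unitary.star_mul_self_of_mem hV⟩, rfl⟩
      rw [Matrix.IsUnit.posDef_star_right_conjugate_iff hVu]
      exact PosDef.diagonal fun i => Complex.zero_lt_real.2 (hc i)
    have hBpd := hpd W hW b hb
    have hMpd : ((W * diagonal (fun i => (b i : ℂ)) * star W) *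
        (P * diagonal (fun i => (a i : ℂ)) * star P) *
        (W * diagonal (fun i => (b i : ℂ)) * star W)).PosDef := by
      have := (Matrix.IsUnit.posDef_star_right_conjugate_iff hBpd.isUnit).2 (hpd P hP a ha)
      rwa [star_eq_conjTranspose (W * diagonal (fun i => (b i : ℂ)) * star W), hBpd.1.eq] at this
    obtain ⟨R, hR, hRe⟩ := exists_decomp hMpd.1
    have hm := eigDown_pos hMpd
    have hma := eigDown_antitone hMpd.1
    set m := eigDown hMpd.1 with hmdef
    have hmain := sum_rpow_le m (fun i => a i * (b i * b i)) hm
      (fun i => mul_pos (ha i) (mul_pos (hb i) (hb i))) hma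
      (fun k hk => prod_le hk a b m ha hb hm haa hba P W R hP hW hR hRe) hz
    simp only [hadef, hbdef, key] at hmain
    rw [hRe, mpow_conj _ hR, trace_conj _ hR]
    exact Real.rpow_le_rpow (Finset.sum_nonneg fun i _ => (Real.rpow_pos_of_pos (hm i) z).le)
      hmain (by positivity)
end

section
/- Let ρ and σ be positive definite d×d density matrices, let α ∈ (0,1) and z ∈ (0,1). Then the minimum of F_{α,z}(ρ, UσU*) over all d×d unitary matrices U equals F_α^C(λ↓(ρ), λ↑(σ)), and this minimum is attained by some unitary U. -/
open Matrix
open scoped ComplexOrder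

/-- real diagonal matrix -/
noncomputable def rdiag {d : ℕ} (a : Fin d → ℝ) : Matrix (Fin d) (Fin d) ℂ :=
  Matrix.diagonal (fun i => (a i : ℂ))

/-- `A = V diag(a) V*` with `V` unitary -/
def SpecForm {d : ℕ} (V : Matrix (Fin d) (Fin d) ℂ) (a : Fin d → ℝ)
    (A : Matrix (Fin d) (Fin d) ℂ) : Prop :=
  V ∈ Matrix.unitaryGroup (Fin d) ℂ ∧ A = V * rdiag a * star V

section helpers
variable {d : ℕ} {V W A B M U : Matrix (Fin d) (Fin d) ℂ} {a b : Fin d → ℝ}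

lemma uni_sm (h : V ∈ Matrix.unitaryGroup (Fin d) ℂ) : star V * V = 1 :=
  Matrix.mem_unitaryGroup_iff'.1 h
lemma uni_ms (h : V ∈ Matrix.unitaryGroup (Fin d) ℂ) : V * star V = 1 :=
  Matrix.mem_unitaryGroup_iff.1 h
lemma uni_star (h : V ∈ Matrix.unitaryGroup (Fin d) ℂ) : star V ∈ Matrix.unitaryGroup (Fin d) ℂ :=
  Unitary.star_mem h

lemma rdiag_star : star (rdiag a) = rdiag a := by
  simp [rdiag, Matrix.star_eq_conjTranspose, Matrix.diagonal_conjTranspose, Pi.star_def]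

lemma rdiag_mul : rdiag a * rdiag b = rdiag (fun i => a i * b i) := by
  simp [rdiag]

lemma rdiag_trace : (rdiag a).trace = ((∑ i, a i : ℝ) : ℂ) := by
  simp [rdiag, Matrix.trace]

lemma SpecForm.isHermitian (h : SpecForm V a A) : A.IsHermitian := by
  rw [h.2]
  show star _ = _
  rw [star_mul, star_mul, star_star, rdiag_star, mul_assoc]

lemma SpecForm.trace (h : SpecForm V a A) : A.trace = ((∑ i, a i : ℝ) : ℂ) := by
  rw [h.2, Matrix.trace_mul_comm, ← mul_assoc, uni_sm h.1, one_mul, rdiag_trace]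

lemma SpecForm.posDef (h : SpecForm V a A) (ha : ∀ i, 0 < a i) : A.PosDef := by
  rw [h.2]
  have hD : (rdiag a).PosDef := by
    unfold rdiag
    rw [Matrix.posDef_diagonal_iff]
    intro i
    exact_mod_cast ha i
  have hV : IsUnit V := ⟨⟨V, star V, uni_ms h.1, uni_sm h.1⟩, rfl⟩
  exact (Matrix.IsUnit.posDef_star_right_conjugate_iff hV).2 hD

lemma SpecForm.pos (h : SpecForm V a A) (hA : A.PosDef) : ∀ i, 0 < a i := by
  rw [h.2] at hA
  have hV : IsUnit V := ⟨⟨V, star V, uni_ms h.1, uni_sm h.1⟩, rfl⟩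
  have := (Matrix.IsUnit.posDef_star_right_conjugate_iff hV).1 hA
  unfold rdiag at this
  rw [Matrix.posDef_diagonal_iff] at this
  intro i
  exact_mod_cast this i

lemma SpecForm.mul (h : SpecForm V a A) (h' : SpecForm V b B) :
    SpecForm V (fun i => a i * b i) (A * B) := by
  refine ⟨h.1, ?_⟩
  rw [h.2, h'.2, ← rdiag_mul]
  calc V * rdiag a * star V * (V * rdiag b * star V)
      = V * rdiag a * (star V * V) * (rdiag b * star V) := by simp only [mul_assoc]
    _ = _ := by rw [uni_sm h.1]; simp only [mul_assoc, one_mul]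

lemma SpecForm.conj (h : SpecForm V a A) (hU : U ∈ Matrix.unitaryGroup (Fin d) ℂ) :
    SpecForm (U * V) a (U * A * star U) := by
  refine ⟨Submonoid.mul_mem _ hU h.1, ?_⟩
  rw [h.2, star_mul]; simp only [mul_assoc]

lemma rdiag_comm (g : ℝ → ℝ) (h : rdiag a * M = M * rdiag b) :
    rdiag (fun i => g (a i)) * M = M * rdiag (fun i => g (b i)) := by
  ext i j
  have := congrFun (congrFun h i) j
  simp only [rdiag, Matrix.diagonal_mul, Matrix.mul_diagonal] at this ⊢
  by_cases hM : M i j = 0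
  · simp [hM]
  · rw [mul_comm] at this
    have := mul_left_cancel₀ hM this
    have : a i = b j := by exact_mod_cast this
    rw [this, mul_comm]

lemma SpecForm.intertwine (g : ℝ → ℝ) (h : SpecForm V a A) (h' : SpecForm W b B)
    (hM : A * M = M * B) :
    (V * rdiag (fun i => g (a i)) * star V) * M = M * (W * rdiag (fun i => g (b i)) * star W) := by
  have h1 : rdiag a * (star V * M * W) = (star V * M * W) * rdiag b := by
    have : star V * (A * M) * W = star V * (M * B) * W := by rw [hM]
    rw [h.2, h'.2] at this
    calc rdiag a * (star V * M * W) = (star V * V) * rdiag a * (star V * M * W) := by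
          rw [uni_sm h.1, one_mul]
      _ = star V * (V * rdiag a * star V * M) * W := by simp only [mul_assoc]
      _ = _ := this
      _ = (star V * M * W) * rdiag b * (star W * W) := by simp only [mul_assoc]
      _ = _ := by rw [uni_sm h'.1, mul_one]
  have h2 := rdiag_comm g h1
  calc _ = V * (rdiag (fun i => g (a i)) * (star V * M * W)) * star W := by
        calc _ = V * rdiag (fun i => g (a i)) * star V * M * (W * star W) := by
              rw [uni_ms h'.1, mul_one]
          _ = _ := by simp only [mul_assoc]
    _ = (V * star V) * M * (W * rdiag (fun i => g (b i)) * star W) := by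
        rw [h2]; simp only [mul_assoc]
    _ = _ := by rw [uni_ms h.1, one_mul]

lemma specForm_eig (hA : A.IsHermitian) :
    SpecForm (hA.eigenvectorUnitary : Matrix (Fin d) (Fin d) ℂ) hA.eigenvalues A := by
  refine ⟨hA.eigenvectorUnitary.2, ?_⟩
  conv_lhs => rw [hA.spectral_theorem]
  rfl

lemma SpecForm.mpow (h : SpecForm V a A) (t : ℝ) : SpecForm V (fun i => a i ^ t) (mpow A t) := by
  refine ⟨h.1, ?_⟩
  have hA := h.isHermitian
  have := (specForm_eig hA).intertwine (M := 1) (fun x => x ^ t) h (by simp)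
  rw [mul_one, one_mul] at this
  rw [← this, _root_.mpow, dif_pos hA]
  rfl

lemma PosDef.mpow (hA : A.PosDef) (t : ℝ) : (mpow A t).PosDef :=
  ((specForm_eig hA.1).mpow t).posDef fun i => Real.rpow_pos_of_pos (hA.eigenvalues_pos i) t

lemma SpecForm.ext (h : SpecForm V a A) (h' : SpecForm V b B) (hab : ∀ i, a i = b i) : A = B := by
  rw [h.2, h'.2, funext hab]

lemma mpow_mpow (hA : A.PosDef) (s t : ℝ) : mpow (mpow A s) t = mpow A (s * t) := by
  have h := specForm_eig hA.1
  refine ((h.mpow s).mpow t).ext (h.mpow _) fun i => ?_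
  rw [Real.rpow_mul (hA.eigenvalues_pos i).le]

lemma mpow_mul (hA : A.PosDef) (s t : ℝ) : mpow A s * mpow A t = mpow A (s + t) := by
  have h := specForm_eig hA.1
  refine ((h.mpow s).mul (h.mpow t)).ext (h.mpow _) fun i => ?_
  rw [Real.rpow_add (hA.eigenvalues_pos i)]

lemma mpow_one (hA : A.IsHermitian) : mpow A 1 = A := by
  have h := specForm_eig hA
  exact (h.mpow 1).ext h fun i => by simp

lemma mpow_zero (hA : A.IsHermitian) : mpow A 0 = 1 := by
  have h := (specForm_eig hA).mpow 0
  rw [h.2]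
  simp [rdiag]

lemma mpow_conj_s2 (hA : A.IsHermitian) (hU : U ∈ Matrix.unitaryGroup (Fin d) ℂ) (t : ℝ) :
    mpow (U * A * star U) t = U * mpow A t * star U := by
  have h := specForm_eig hA
  exact ((h.conj hU).mpow t).ext ((h.mpow t).conj hU) fun i => rfl

lemma mpow_comm (hA : A.IsHermitian) (h : A * M = M * A) (t : ℝ) :
    mpow A t * M = M * mpow A t := by
  have hs := specForm_eig hA
  have := hs.intertwine (fun x => x ^ t) hs h
  rwa [← (hs.mpow t).2] at this

lemma of_mpow_comm (hA : A.PosDef) {s : ℝ} (hs : s ≠ 0) (h : mpow A s * M = M * mpow A s) :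
    A * M = M * A := by
  have := mpow_comm (PosDef.mpow hA s).1 h (1 / s)
  rwa [mpow_mpow hA, mul_one_div_cancel hs, mpow_one hA.1] at this

lemma trace_conj_s2 (hU : U ∈ Matrix.unitaryGroup (Fin d) ℂ) : (U * A * star U).trace = A.trace := by
  rw [Matrix.trace_mul_comm, ← mul_assoc, uni_sm hU, one_mul]

lemma conj_posDef (hA : A.PosDef) (hU : U ∈ Matrix.unitaryGroup (Fin d) ℂ) :
    (U * A * star U).PosDef :=
  ((specForm_eig hA.1).conj hU).posDef hA.eigenvalues_pos

/-- Klein's inequality for `x ↦ x ^ z`. -/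
lemma klein {X Y : Matrix (Fin d) (Fin d) ℂ} (hX : X.PosDef) (hY : Y.PosDef) {z : ℝ}
    (hz : z ∈ Set.Ioo (0 : ℝ) 1) :
    (mpow Y z).trace.re ≤ (mpow X z).trace.re + z * (mpow X (z - 1) * (Y - X)).trace.re := by
  obtain ⟨V, x, sx⟩ : ∃ V x, SpecForm V x X := ⟨_, _, specForm_eig hX.1⟩
  obtain ⟨W, y, sy⟩ : ∃ V x, SpecForm V x Y := ⟨_, _, specForm_eig hY.1⟩
  have hx : ∀ i, 0 < x i := sx.pos hX
  have hy : ∀ i, 0 < y i := sy.pos hY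
  have e1 : (mpow X (z-1) * X) = mpow X z := by
    nth_rw 2 [← mpow_one hX.1]
    rw [mpow_mul hX]; congr 1; ring
  set Q := star V * W with hQ
  have hQu : Q ∈ Matrix.unitaryGroup (Fin d) ℂ := Submonoid.mul_mem _ (uni_star sx.1) sy.1
  have hrow : ∀ i, ∑ j, Complex.normSq (Q i j) = 1 := by
    intro i
    have := congrFun (congrFun (uni_ms hQu) i) i
    simp only [Matrix.mul_apply, Matrix.star_apply, Matrix.one_apply_eq] at this
    have h2 : ((∑ j, Complex.normSq (Q i j) : ℝ) : ℂ) = 1 := by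
      rw [← this]; push_cast
      refine Finset.sum_congr rfl fun j _ => ?_
      rw [← Complex.mul_conj]; rfl
    exact_mod_cast h2
  have hcol : ∀ j, ∑ i, Complex.normSq (Q i j) = 1 := by
    intro i
    have := congrFun (congrFun (uni_sm hQu) i) i
    simp only [Matrix.mul_apply, Matrix.star_apply, Matrix.one_apply_eq] at this
    have h2 : ((∑ j, Complex.normSq (Q j i) : ℝ) : ℂ) = 1 := by
      rw [← this]; push_cast
      refine Finset.sum_congr rfl fun j _ => ?_
      rw [← Complex.mul_conj, mul_comm]; rfl
    exact_mod_cast h2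
  have e2 : (mpow X (z-1) * Y).trace.re
      = ∑ i, ∑ j, x i ^ (z-1) * y j * Complex.normSq (Q i j) := by
    have : (mpow X (z-1) * Y).trace = (rdiag (fun i => x i ^ (z-1)) * (Q * rdiag y * star Q)).trace := by
      rw [(sx.mpow (z-1)).2]
      conv_lhs => rw [sy.2]
      rw [mul_assoc V, mul_assoc V, Matrix.trace_mul_comm V, hQ, star_mul, star_star]
      simp only [mul_assoc]
    rw [this, Matrix.trace, Complex.re_sum]
    refine Finset.sum_congr rfl fun i _ => ?_
    simp only [rdiag, Matrix.diag_apply, Matrix.diagonal_mul]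
    rw [Matrix.mul_apply, Finset.mul_sum, Complex.re_sum]
    refine Finset.sum_congr rfl fun j _ => ?_
    rw [Matrix.mul_diagonal, Matrix.star_apply]
    have : ((x i ^ (z-1) : ℝ):ℂ) * (Q i j * (y j : ℂ) * star (Q i j)) =
      ((x i ^ (z-1) * y j * Complex.normSq (Q i j) : ℝ) : ℂ) := by
      push_cast [← Complex.mul_conj]
      show _ * (_ * _ * (starRingEnd ℂ) _) = _
      ring
    rw [this, Complex.ofReal_re]
  rw [mul_sub, e1, Matrix.trace_sub, Complex.sub_re, e2, (sx.mpow z).trace, (sy.mpow z).trace,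
    Complex.ofReal_re, Complex.ofReal_re]
  have key : ∀ i j, y j ^ z ≤ x i ^ z + z * (x i ^ (z-1) * y j - x i ^ z) := by
    intro i j
    have := rpow_one_add_le_one_add_mul_self (s := y j / x i - 1)
      (by have := div_pos (hy j) (hx i); linarith) hz.1.le hz.2.le
    rw [add_sub_cancel, Real.div_rpow (hy j).le (hx i).le] at this
    have hp := Real.rpow_pos_of_pos (hx i) z
    rw [div_le_iff₀ hp] at this
    refine this.trans_eq ?_
    rw [Real.rpow_sub_one (hx i).ne']
    ring
  have hsum : ∑ i, ∑ j, Complex.normSq (Q i j) * y j ^ z ≤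
      ∑ i, ∑ j, Complex.normSq (Q i j) * (x i ^ z + z * (x i ^ (z-1) * y j - x i ^ z)) :=
    Finset.sum_le_sum fun i _ => Finset.sum_le_sum fun j _ =>
      mul_le_mul_of_nonneg_left (key i j) (Complex.normSq_nonneg _)
  have l1 : ∑ i, ∑ j, Complex.normSq (Q i j) * y j ^ z = ∑ j, y j ^ z := by
    rw [Finset.sum_comm]
    refine Finset.sum_congr rfl fun j _ => ?_
    rw [← Finset.sum_mul, hcol, one_mul]
  have l2 : ∑ i, ∑ j, Complex.normSq (Q i j) * (x i ^ z + z * (x i ^ (z-1) * y j - x i ^ z))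
      = ∑ i, x i ^ z + z * (∑ i, ∑ j, x i ^ (z-1) * y j * Complex.normSq (Q i j) - ∑ i, x i ^ z) := by
    rw [← Finset.sum_sub_distrib, Finset.mul_sum, ← Finset.sum_add_distrib]
    refine Finset.sum_congr rfl fun i _ => ?_
    calc _ = ∑ j, (Complex.normSq (Q i j) * (x i ^ z - z * x i ^ z)
              + z * (x i ^ (z-1) * y j * Complex.normSq (Q i j))) :=
          Finset.sum_congr rfl fun j _ => by ring
      _ = _ := by
          rw [Finset.sum_add_distrib, ← Finset.sum_mul, hrow, ← Finset.mul_sum]; ring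
  rw [l1, l2] at hsum
  exact hsum

/-- If `Tr (C W R W*)` is minimised at `W = 1` then `C` and `R` commute. -/
lemma comm_of_min {C R : Matrix (Fin d) (Fin d) ℂ} (hC : C.IsHermitian) (hR : R.IsHermitian)
    (h : ∀ W ∈ Matrix.unitaryGroup (Fin d) ℂ, (C * R).trace.re ≤ (C * (W * R * star W)).trace.re) :
    C * R = R * C := by
  have hL : (Complex.I • (R * C - C * R)).IsHermitian := by
    show (Complex.I • (R * C - C * R))ᴴ = _
    rw [Matrix.conjTranspose_smul, Matrix.conjTranspose_sub, Matrix.conjTranspose_mul,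
      Matrix.conjTranspose_mul, hC.eq, hR.eq]
    simp [smul_sub]
    abel
  obtain ⟨V, l, hV⟩ : ∃ V l, SpecForm V l (Complex.I • (R * C - C * R)) := ⟨_, _, specForm_eig hL⟩
  have hl : ∀ i, l i = 0 := by
    set C' := star V * C * V with hC'
    set R' := star V * R * V with hR'
    have hprod : ∀ X Y : Matrix (Fin d) (Fin d) ℂ, star V * (X * Y) * V
        = (star V * X * V) * (star V * Y * V) := by
      intro X Y
      calc _ = star V * X * 1 * (Y * V) := by simp only [mul_assoc, one_mul]
        _ = _ := by rw [← uni_ms hV.1]; simp only [mul_assoc]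
    have hD : rdiag l = Complex.I • (R' * C' - C' * R') := by
      have : star V * (Complex.I • (R * C - C * R)) * V = rdiag l := by
        rw [hV.2]
        calc _ = (star V * V) * rdiag l * (star V * V) := by simp only [mul_assoc]
          _ = _ := by rw [uni_sm hV.1, one_mul, mul_one]
      rw [← this, Matrix.mul_smul, Matrix.smul_mul, mul_sub, sub_mul, hprod, hprod]
    let φ : ℝ → ℂ := fun θ => ∑ k, ∑ j, C' k j * R' j k * Complex.exp (Complex.I * (l j - l k) * θ)
    have hφ : ∀ θ : ℝ, ∃ W ∈ Matrix.unitaryGroup (Fin d) ℂ,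
        φ θ = (C * (W * R * star W)).trace := by
      intro θ
      let E : Matrix (Fin d) (Fin d) ℂ := Matrix.diagonal fun j => Complex.exp (Complex.I * l j * θ)
      have hE : star E = Matrix.diagonal fun j => Complex.exp (-(Complex.I * l j * θ)) := by
        simp only [E, Matrix.star_eq_conjTranspose, Matrix.diagonal_conjTranspose]
        congr 1; ext j
        simp [← Complex.exp_conj]
      have hEu : E ∈ Matrix.unitaryGroup (Fin d) ℂ := by
        rw [Matrix.mem_unitaryGroup_iff, hE]
        simp [E, ← Complex.exp_add]
      refine ⟨V * E * star V, Submonoid.mul_mem _ (Submonoid.mul_mem _ hV.1 hEu) (uni_star hV.1), ?_⟩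
      have : (C * (V * E * star V * R * star (V * E * star V))).trace
          = (C' * (E * R' * star E)).trace := by
        have : C * (V * E * star V * R * star (V * E * star V))
          = (C * V * E * star V * R * V * star E) * star V := by
          simp only [star_mul, star_star, mul_assoc]
        rw [this, Matrix.trace_mul_comm]
        simp only [hC', hR', mul_assoc]
      rw [this, Matrix.trace]
      refine Finset.sum_congr rfl fun k _ => ?_
      rw [Matrix.diag_apply, Matrix.mul_apply]
      refine Finset.sum_congr rfl fun j _ => ?_
      rw [hE, Matrix.mul_diagonal, Matrix.diagonal_mul]
      have : Complex.exp (Complex.I * (l j - l k) * θ) =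
        Complex.exp (Complex.I * l j * θ) * Complex.exp (-(Complex.I * l k * θ)) := by
        rw [← Complex.exp_add]; congr 1; ring
      rw [this]; ring
    have hφ0 : φ 0 = (C * R).trace := by
      have h1 : φ 0 = (C' * R').trace := by
        simp [φ, Matrix.trace, Matrix.mul_apply]
      rw [h1, hC', hR', ← hprod, Matrix.trace_mul_comm, ← mul_assoc, uni_ms hV.1, one_mul]
    have hmin : IsLocalMin (fun θ => (φ θ).re) 0 := by
      refine Filter.Eventually.of_forall fun θ => ?_
      obtain ⟨W, hW, e⟩ := hφ θ
      show (φ 0).re ≤ (φ θ).re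
      rw [hφ0, e]
      exact h W hW
    have hder : HasDerivAt φ (∑ k, ∑ j, C' k j * R' j k * (Complex.I * (l j - l k))) 0 := by
      refine HasDerivAt.fun_sum fun k _ => HasDerivAt.fun_sum fun j _ => ?_
      refine HasDerivAt.const_mul _ ?_
      have h1 : HasDerivAt (fun θ : ℝ => Complex.I * (l j - l k) * (θ : ℂ))
          (Complex.I * (l j - l k)) 0 := by
        simpa using (Complex.ofRealCLM.hasDerivAt (x := (0:ℝ))).const_mul
          (Complex.I * ((l j : ℂ) - l k))
      simpa using h1.cexp
    have hval : (∑ k, ∑ j, C' k j * R' j k * (Complex.I * (l j - l k)))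
        = ((∑ i, l i ^ 2 : ℝ) : ℂ) := by
      have e1 : ∀ i, (l i : ℂ) = Complex.I * ((∑ j, R' i j * C' j i) - ∑ j, C' i j * R' j i) := by
        intro i
        have := congrFun (congrFun hD i) i
        simpa [rdiag, Matrix.mul_apply] using this
      have e2 : ((∑ i, l i ^ 2 : ℝ) : ℂ) = ∑ i, (l i : ℂ) *
          (Complex.I * ((∑ j, R' i j * C' j i) - ∑ j, C' i j * R' j i)) := by
        push_cast
        refine Finset.sum_congr rfl fun i _ => ?_
        rw [← e1 i, sq]
      rw [e2]
      simp only [mul_sub, Finset.sum_sub_distrib]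
      congr 1
      · rw [Finset.sum_comm]
        refine Finset.sum_congr rfl fun i _ => ?_
        rw [Finset.mul_sum, Finset.mul_sum]
        exact Finset.sum_congr rfl fun j _ => by ring
      · refine Finset.sum_congr rfl fun i _ => ?_
        rw [Finset.mul_sum, Finset.mul_sum]
        exact Finset.sum_congr rfl fun j _ => by ring
    rw [hval] at hder
    have hre : HasDerivAt (fun θ => (φ θ).re) (∑ i, l i ^ 2) 0 := by
      have := (Complex.reCLM.hasFDerivAt (x := φ 0)).comp_hasDerivAt (0:ℝ) hder
      simpa [Function.comp_def, -Complex.ofReal_sum] using this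
    have hz := hmin.hasDerivAt_eq_zero hre
    rw [Finset.sum_eq_zero_iff_of_nonneg (fun i _ => sq_nonneg _)] at hz
    intro i
    exact pow_eq_zero_iff (two_ne_zero) |>.1 (hz i (Finset.mem_univ i))
  have h0 : Complex.I • (R * C - C * R) = 0 := by
    rw [hV.2]
    simp [rdiag, hl]
  rw [smul_eq_zero] at h0
  rcases h0 with h0 | h0
  · exact absurd h0 Complex.I_ne_zero
  · exact (sub_eq_zero.1 h0).symm

lemma unitary_compact : IsCompact {U : Matrix (Fin d) (Fin d) ℂ | U ∈ Matrix.unitaryGroup (Fin d) ℂ} := by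
  have hc : IsCompact (Set.univ.pi fun _ : Fin d => Set.univ.pi fun _ : Fin d =>
      Metric.closedBall (0:ℂ) 1) :=
    isCompact_univ_pi fun _ => isCompact_univ_pi fun _ => isCompact_closedBall _ _
  refine IsCompact.of_isClosed_subset (X := Fin d → Fin d → ℂ) hc ?_ ?_
  · have : IsClosed {U : Matrix (Fin d) (Fin d) ℂ | U * star U = 1} :=
      isClosed_eq (by fun_prop) (by fun_prop)
    have e : {U : Matrix (Fin d) (Fin d) ℂ | U ∈ Matrix.unitaryGroup (Fin d) ℂ}
        = {U | U * star U = 1} := by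
      ext U
      exact Matrix.mem_unitaryGroup_iff
    rw [e]
    exact this
  · intro U hU i _ j _
    rw [mem_closedBall_zero_iff]
    exact entry_norm_bound_of_unitary hU i j

section cont
open scoped Matrix.Norms.L2Operator
lemma cont_mpow {X : Type*} [TopologicalSpace X] {s : Set X} {f : X → Matrix (Fin d) (Fin d) ℂ}
    (hf : ContinuousOn f s) (hh : ∀ x ∈ s, (f x).IsHermitian) {z : ℝ} (hz : 0 < z) :
    ContinuousOn (fun x => mpow (f x) z) s := by
  have h1 : ContinuousOn (fun x => cfc (fun y : ℝ => y ^ z) (f x)) s :=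
    ContinuousOn.cfc_of_mem_nhdsSet (s := Set.univ) _ (by simp) hf hh
      (Real.continuous_rpow_const hz.le).continuousOn
  refine h1.congr fun x hx => ?_
  simp only
  rw [(hh x hx).cfc_eq, mpow, dif_pos (hh x hx)]
  rfl
end cont

lemma bub_posDef (hB : B.PosDef) {R : Matrix (Fin d) (Fin d) ℂ} (hR : R.PosDef) :
    (B * R * B).PosDef := by
  have := (Matrix.IsUnit.posDef_star_right_conjugate_iff hB.isUnit).2 hR
  rwa [Matrix.star_eq_conjTranspose, hB.1.eq] at this

lemma exists_min (hB : B.PosDef) {R : Matrix (Fin d) (Fin d) ℂ} (hR : R.PosDef) {z : ℝ}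
    (hz : 0 < z) : ∃ U ∈ Matrix.unitaryGroup (Fin d) ℂ, ∀ W ∈ Matrix.unitaryGroup (Fin d) ℂ,
      (mpow (B * (U * R * star U) * B) z).trace.re ≤ (mpow (B * (W * R * star W) * B) z).trace.re := by
  have hne : {U : Matrix (Fin d) (Fin d) ℂ | U ∈ Matrix.unitaryGroup (Fin d) ℂ}.Nonempty :=
    ⟨1, Submonoid.one_mem (Matrix.unitaryGroup (Fin d) ℂ)⟩
  have hc : ContinuousOn (fun U => (mpow (B * (U * R * star U) * B) z).trace.re)
      {U : Matrix (Fin d) (Fin d) ℂ | U ∈ Matrix.unitaryGroup (Fin d) ℂ} := by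
    have := cont_mpow (s := {U : Matrix (Fin d) (Fin d) ℂ | U ∈ Matrix.unitaryGroup (Fin d) ℂ})
      (f := fun U => B * (U * R * star U) * B) (by fun_prop)
      (fun U hU => (bub_posDef hB (conj_posDef hR hU)).1) hz
    exact Complex.continuous_re.comp_continuousOn
      ((continuous_id.matrix_trace).comp_continuousOn this)
  obtain ⟨U, hU, hm⟩ := unitary_compact.exists_isMinOn hne hc
  exact ⟨U, hU, fun W hW => hm hW⟩

lemma specForm_perm (hA : A.IsHermitian) (h : SpecForm V a A) :
    ∃ π : Equiv.Perm (Fin d), a = hA.eigenvalues ∘ π := by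
  have h1 := hA.roots_charpoly_eq_eigenvalues
  have h2 : A.charpoly = ∏ i, (Polynomial.X - Polynomial.C (a i : ℂ)) := by
    conv_lhs => rw [h.2]
    rw [Matrix.charpoly_mul_comm, ← mul_assoc, uni_sm h.1, one_mul]
    exact Matrix.charpoly_diagonal _
  have h3 : A.charpoly.roots = Multiset.map (fun i => (a i : ℂ)) Finset.univ.val := by
    rw [h2]
    rw [Polynomial.roots_prod _ _ (Finset.prod_ne_zero_iff.2 fun i _ => Polynomial.X_sub_C_ne_zero _)]
    simp
  have h4 : Multiset.map a Finset.univ.val = Multiset.map hA.eigenvalues Finset.univ.val := by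
    have := congrArg (Multiset.map Complex.re) (h3.symm.trans h1)
    simpa [Multiset.map_map, Function.comp_def] using this
  have h5 : (List.ofFn a).Perm (List.ofFn hA.eigenvalues) := by
    rw [← Multiset.coe_eq_coe, List.ofFn_eq_map, List.ofFn_eq_map]
    exact h4
  have h6 : a ∘ Tuple.sort a = hA.eigenvalues ∘ Tuple.sort hA.eigenvalues := by
    rw [← List.ofFn_inj]
    refine List.Perm.eq_of_sortedLE (Tuple.monotone_sort a).sortedLE_ofFn
      (Tuple.monotone_sort _).sortedLE_ofFn ?_
    exact (Equiv.Perm.ofFn_comp_perm _ _).trans (h5.trans (Equiv.Perm.ofFn_comp_perm _ _).symm)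
  refine ⟨(Tuple.sort a).symm.trans (Tuple.sort hA.eigenvalues), ?_⟩
  ext i
  have := congrFun h6 ((Tuple.sort a).symm i)
  simpa using this

lemma simul_diag (hA : A.PosDef) (hB : B.PosDef) (h : A * B = B * A) :
    ∃ V a b, SpecForm V a A ∧ SpecForm V b B := by
  classical
  set S := Matrix.toEuclideanLin A with hS
  set T := Matrix.toEuclideanLin B with hT
  have sS : S.IsSymmetric := Matrix.isSymmetric_toEuclideanLin_iff.2 hA.1
  have sT : T.IsSymmetric := Matrix.isSymmetric_toEuclideanLin_iff.2 hB.1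
  have hcomm : Commute S T := by
    ext v i
    simp [hS, hT, Matrix.toLpLin_apply, h]
  let E : Module.End.Eigenvalues T × Module.End.Eigenvalues S → Submodule ℂ (EuclideanSpace ℂ (Fin d)) :=
    fun i => Module.End.eigenspace S (i.2 : ℂ) ⊓ Module.End.eigenspace T (i.1 : ℂ)
  have hOF : OrthogonalFamily ℂ (fun i => E i) fun i => (E i).subtypeₗᵢ := by
    have := LinearMap.IsSymmetric.orthogonalFamily_eigenspace_inf_eigenspace sS sT
    exact this.comp (γ := Module.End.Eigenvalues T × Module.End.Eigenvalues S)
      (f := fun i => ((i.1 : ℂ), (i.2 : ℂ))) (by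
        rintro ⟨x, y⟩ ⟨x', y'⟩ hh
        simp only [Prod.mk.injEq] at hh
        exact Prod.ext (Subtype.ext hh.1) (Subtype.ext hh.2))
  have hInternal : DirectSum.IsInternal E := by
    rw [hOF.isInternal_iff, Submodule.orthogonal_eq_bot_iff, eq_top_iff,
      ← LinearMap.IsSymmetric.iSup_iSup_eigenspace_inf_eigenspace_eq_top_of_commute sS sT hcomm]
    refine iSup_le fun x => iSup_le fun y => ?_
    by_cases hx : Module.End.HasEigenvalue S x
    · by_cases hy : Module.End.HasEigenvalue T y
      · exact le_iSup E (⟨y, hy⟩, ⟨x, hx⟩)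
      · have : Module.End.eigenspace T y = ⊥ := by
          by_contra hc; exact hy (Module.End.hasEigenvalue_iff.2 hc)
        simp [this]
    · have : Module.End.eigenspace S x = ⊥ := by
        by_contra hc; exact hx (Module.End.hasEigenvalue_iff.2 hc)
      simp [this]
  have hn : Module.finrank ℂ (EuclideanSpace ℂ (Fin d)) = d := by simp
  let v := hInternal.subordinateOrthonormalBasis hn hOF
  have hv : ∀ i, ∃ α β : ℂ, A *ᵥ (v i).ofLp = α • (v i).ofLp ∧ B *ᵥ (v i).ofLp = β • (v i).ofLp := by
    intro i
    have := hInternal.subordinateOrthonormalBasis_subordinate hn i hOF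
    obtain ⟨h1, h2⟩ := Submodule.mem_inf.1 this
    rw [Module.End.mem_eigenspace_iff] at h1 h2
    exact ⟨_, _, congrArg WithLp.ofLp h1, congrArg WithLp.ofLp h2⟩
  choose α β h1 h2 using hv
  let V : Matrix (Fin d) (Fin d) ℂ := (EuclideanSpace.basisFun (Fin d) ℂ).toBasis.toMatrix v.toBasis
  have hV : V ∈ Matrix.unitaryGroup (Fin d) ℂ :=
    (EuclideanSpace.basisFun (Fin d) ℂ).toMatrix_orthonormalBasis_mem_unitary v
  have hVa : ∀ i j, V i j = (v j).ofLp i := fun i j => rfl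
  have gen : ∀ (M : Matrix (Fin d) (Fin d) ℂ) (γ : Fin d → ℂ), M.PosDef →
      (∀ i, M *ᵥ (v i).ofLp = γ i • (v i).ofLp) → SpecForm V (fun i => (γ i).re) M := by
    intro M γ hM hγ
    have e1 : M * V = V * Matrix.diagonal γ := by
      ext i j
      have := congrFun (hγ j) i
      rw [Matrix.mul_diagonal, Matrix.mul_apply, hVa, mul_comm]
      exact this
    have e2 : M = V * Matrix.diagonal γ * star V := by
      rw [← e1, mul_assoc, uni_ms hV, mul_one]
    have hpos : ∀ i, 0 < γ i := by
      have hU : IsUnit V := ⟨⟨V, star V, uni_ms hV, uni_sm hV⟩, rfl⟩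
      rw [e2] at hM
      have := (Matrix.IsUnit.posDef_star_right_conjugate_iff hU).1 hM
      rwa [Matrix.posDef_diagonal_iff] at this
    have e3 : rdiag (fun i => (γ i).re) = Matrix.diagonal γ := by
      unfold rdiag
      congr 1; ext i
      exact (Complex.eq_re_of_ofReal_le (r := 0) (by simpa using (hpos i).le)).symm
    exact ⟨hV, by rw [e3, ← e2]⟩
  exact ⟨V, _, _, gen A α hA h1, gen B β hB h2⟩

lemma minimizer_comm (hB : B.PosDef) {R : Matrix (Fin d) (Fin d) ℂ} (hR : R.PosDef) {z : ℝ}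
    (hz : z ∈ Set.Ioo (0:ℝ) 1)
    (hm : ∀ W ∈ Matrix.unitaryGroup (Fin d) ℂ,
      (mpow (B * R * B) z).trace.re ≤ (mpow (B * (W * R * star W) * B) z).trace.re) :
    B * R = R * B := by
  have hX := bub_posDef hB hR
  set X := B * R * B with hXdef
  set P := mpow X (z - 1) with hP
  have hPd : P.PosDef := PosDef.mpow hX _
  have e1 : P * X = mpow X z := by
    nth_rw 1 [← mpow_one hX.1]
    rw [hP, mpow_mul hX]; congr 1; ring
  have e2 : X * P = mpow X z := by
    nth_rw 1 [← mpow_one hX.1]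
    rw [hP, mpow_mul hX]; congr 1; ring
  have tr : ∀ Y : Matrix (Fin d) (Fin d) ℂ, (P * (B * Y * B)).trace = (B * P * B * Y).trace := by
    intro Y
    have : P * (B * Y * B) = (P * B * Y) * B := by simp only [mul_assoc]
    rw [this, Matrix.trace_mul_comm]; simp only [mul_assoc]
  have hc : (B * P * B) * R = R * (B * P * B) := by
    refine comm_of_min (bub_posDef hB hPd).1 hR.1 fun W hW => ?_
    have h1 := hm W hW
    have h2 := klein hX (bub_posDef hB (conj_posDef hR hW)) hz
    have h3 : 0 ≤ (P * (B * (W * R * star W) * B - X)).trace.re := by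
      have : 0 ≤ z * (P * (B * (W * R * star W) * B - X)).trace.re := by linarith
      exact nonneg_of_mul_nonneg_right this hz.1
    rw [mul_sub, Matrix.trace_sub, tr, hXdef, tr, Complex.sub_re] at h3
    linarith
  have f1 : B * mpow X z = B * P * B * R * B := by
    rw [← e1, hXdef]; simp only [mul_assoc]
  have f2 : mpow X z * B = B * (B * P * B * R) := by
    rw [hc, ← e2, hXdef]; simp only [mul_assoc]
  have f3 : mpow X z * (B * B) = (B * B) * mpow X z := by
    rw [← mul_assoc, f2, mul_assoc B B, f1]; simp only [mul_assoc]
  have f4 := of_mpow_comm hX hz.1.ne' f3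
  have f5 : B * B = mpow B 2 := by
    nth_rw 1 2 [← mpow_one hB.1]
    rw [mpow_mul hB]; norm_num
  rw [f5] at f4
  have f6 := of_mpow_comm hB two_ne_zero f4.symm
  have f7 : B * (B * R) * B = B * (R * B) * B := by
    rw [hXdef] at f6
    simpa only [mul_assoc] using f6
  exact hB.isUnit.mul_left_cancel (hB.isUnit.mul_right_cancel f7)

lemma Faz_spec {ρ σ : Matrix (Fin d) (Fin d) ℂ} {p q : Fin d → ℝ} {α z : ℝ} (hz : 0 < z)
    (h1 : SpecForm V p ρ) (h2 : SpecForm V q σ) (hp : ∀ i, 0 < p i) (hq : ∀ i, 0 < q i) :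
    Faz ρ σ α z = FazC p q α := by
  unfold Faz FazC
  congr 1
  rw [((((h2.mpow _).mul (h1.mpow _)).mul (h2.mpow _)).mpow z).trace, Complex.ofReal_re]
  refine Finset.sum_congr rfl fun i _ => ?_
  have a1 := Real.rpow_pos_of_pos (hq i) ((1 - α) / (2 * z))
  have a2 := Real.rpow_pos_of_pos (hp i) (α / z)
  rw [mul_right_comm, ← Real.rpow_add (hq i), Real.mul_rpow (Real.rpow_pos_of_pos (hq i) _).le a2.le,
    ← Real.rpow_mul (hq i).le, ← Real.rpow_mul (hp i).le, mul_comm]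
  congr 2 <;> field_simp
  ring

lemma antivary_sort {p q : Fin d → ℝ} (hp : ∀ i, 0 < p i) (hq : ∀ i, 0 < q i) {α : ℝ}
    (hα : α ∈ Set.Ioo (0:ℝ) 1) :
    Antivary (fun i => sortDown p i ^ α) (fun i => sortUp q i ^ (1 - α)) := by
  refine Antitone.antivary (fun i j hij => ?_) (fun i j hij => ?_)
  · exact Real.rpow_le_rpow (hp _).le (Tuple.monotone_sort p (Fin.rev_le_rev.2 hij)) hα.1.le
  · exact Real.rpow_le_rpow (hq _).le (Tuple.monotone_sort q hij) (by linarith [hα.2])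

lemma FazC_le {p q : Fin d → ℝ} (hp : ∀ i, 0 < p i) (hq : ∀ i, 0 < q i) {α : ℝ}
    (hα : α ∈ Set.Ioo (0:ℝ) 1) (π τ : Equiv.Perm (Fin d)) :
    FazC (sortDown p) (sortUp q) α ≤ FazC (p ∘ π) (q ∘ τ) α := by
  unfold FazC
  refine Real.rpow_le_rpow (Finset.sum_nonneg fun i _ => ?_) ?_ (by have := hα.1; positivity)
  · exact mul_nonneg (Real.rpow_nonneg (hp _).le _) (Real.rpow_nonneg (hq _).le _)
  · let s : Equiv.Perm (Fin d) := Fin.revPerm.trans (Tuple.sort p)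
    let t : Equiv.Perm (Fin d) := Tuple.sort q
    have h := (antivary_sort hp hq hα).sum_mul_le_sum_mul_comp_perm
      (σ := ((s.trans π.symm).trans τ).trans t.symm)
    refine h.trans_eq ?_
    rw [← Equiv.sum_comp (s.trans π.symm) (fun i => (p ∘ π) i ^ α * (q ∘ τ) i ^ (1 - α))]
    refine Finset.sum_congr rfl fun i _ => ?_
    simp [s, t, sortDown, sortUp]

lemma perm_conj (π : Equiv.Perm (Fin d)) : ∃ P ∈ Matrix.unitaryGroup (Fin d) ℂ,
    ∀ a : Fin d → ℝ, P * rdiag (a ∘ π) * star P = rdiag a := by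
  obtain ⟨P, hPa⟩ : ∃ P : Matrix (Fin d) (Fin d) ℂ, ∀ i j, P i j = if i = π j then 1 else 0 :=
    ⟨fun i j => if i = π j then 1 else 0, fun _ _ => rfl⟩
  have hPs : P * star P = 1 := by
    ext i j
    rw [Matrix.mul_apply, ← Equiv.sum_comp π.symm]
    simp [hPa, Matrix.star_apply, Matrix.one_apply]
  refine ⟨P, Matrix.mem_unitaryGroup_iff.2 hPs, fun a => ?_⟩
  have : P * rdiag (a ∘ π) = rdiag a * P := by
    ext i j
    simp only [rdiag, Matrix.mul_diagonal, Matrix.diagonal_mul, hPa]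
    split_ifs with h
    · simp [h]
    · simp
  rw [this, mul_assoc, hPs, mul_one]

lemma SpecForm.reindex {P : Matrix (Fin d) (Fin d) ℂ} {π : Equiv.Perm (Fin d)}
    (h : SpecForm V a A) (hP : P ∈ Matrix.unitaryGroup (Fin d) ℂ)
    (hP' : ∀ a : Fin d → ℝ, P * rdiag (a ∘ π) * star P = rdiag a) :
    SpecForm (V * P) (a ∘ π) A := by
  refine ⟨Submonoid.mul_mem _ h.1 hP, ?_⟩
  conv_lhs => rw [h.2, ← hP' a]
  rw [star_mul]; simp only [mul_assoc]

end helpers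

/-- for positive definite density matrices `ρ, σ`, `α ∈ (0,1)` and `z ∈ (0,1)`,
the minimum of `F_{α,z}(ρ, UσU*)` over unitaries `U` is `F_α^C(λ↓(ρ), λ↑(σ))`, attained. -/
theorem stmt_2 {d : ℕ} (ρ σ : Matrix (Fin d) (Fin d) ℂ)
    (hρ : ρ.PosDef) (hσ : σ.PosDef) (hρ1 : ρ.trace = 1) (hσ1 : σ.trace = 1)
    (α z : ℝ) (hα : α ∈ Set.Ioo (0 : ℝ) 1) (hz : z ∈ Set.Ioo (0 : ℝ) 1) :
    IsLeast {x : ℝ | ∃ U ∈ Matrix.unitaryGroup (Fin d) ℂ,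
        x = Faz ρ (U * σ * star U) α z}
      (FazC (eigDown hρ.1) (eigUp hσ.1) α) := by
  have hz0 := hz.1
  have hα0 := hα.1
  constructor
  · -- attained
    have s1 := specForm_eig hρ.1
    have s2 := specForm_eig hσ.1
    set V : Matrix (Fin d) (Fin d) ℂ := hρ.1.eigenvectorUnitary.1 with hV
    set W : Matrix (Fin d) (Fin d) ℂ := hσ.1.eigenvectorUnitary.1 with hW
    obtain ⟨P₁, hP₁, hP₁'⟩ := perm_conj (Fin.revPerm.trans (Tuple.sort hρ.1.eigenvalues))
    obtain ⟨P₂, hP₂, hP₂'⟩ := perm_conj (Tuple.sort hσ.1.eigenvalues)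
    have t1 := s1.reindex hP₁ hP₁'
    have t2 := s2.reindex hP₂ hP₂'
    have hU : (V * P₁) * star (W * P₂) ∈ Matrix.unitaryGroup (Fin d) ℂ :=
      Submonoid.mul_mem _ t1.1 (uni_star t2.1)
    refine ⟨_, hU, ?_⟩
    have t3 := t2.conj hU
    rw [mul_assoc (V * P₁), uni_sm t2.1, mul_one] at t3
    rw [Faz_spec hz0 t1 t3 (fun i => hρ.eigenvalues_pos _) (fun i => hσ.eigenvalues_pos _)]
    rfl
  · rintro x ⟨U, hU, rfl⟩
    set B := mpow σ ((1 - α) / (2 * z)) with hBdef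
    set R := mpow ρ (α / z) with hRdef
    have hB : B.PosDef := PosDef.mpow hσ _
    have hR : R.PosDef := PosDef.mpow hρ _
    have hFaz : ∀ W ∈ Matrix.unitaryGroup (Fin d) ℂ, Faz (W * ρ * star W) σ α z
        = (mpow (B * (W * R * star W) * B) z).trace.re ^ (1 / α) := by
      intro W hW
      unfold Faz
      rw [mpow_conj_s2 hρ.1 hW]
    have hinv : Faz ρ (U * σ * star U) α z = Faz (star U * ρ * star (star U)) σ α z := by
      rw [hFaz _ (uni_star hU)]
      unfold Faz
      rw [mpow_conj_s2 hσ.1 hU, ← hBdef, ← hRdef]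
      have : U * B * star U * R * (U * B * star U)
          = U * (B * (star U * R * star (star U)) * B) * star U := by
        simp only [mul_assoc, star_star]
      rw [this, mpow_conj_s2 (bub_posDef hB (conj_posDef hR (uni_star hU))).1 hU, trace_conj_s2 hU]
    obtain ⟨U₀, hU₀, hmin⟩ := exists_min hB hR hz0
    have hcomm : B * (U₀ * R * star U₀) = (U₀ * R * star U₀) * B := by
      refine minimizer_comm hB (conj_posDef hR hU₀) hz fun W hW => ?_
      have := hmin (W * U₀) (Submonoid.mul_mem _ hW hU₀)
      simpa only [star_mul, mul_assoc] using this
    have hρ₀ := conj_posDef hρ hU₀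
    rw [hRdef, ← mpow_conj_s2 hρ.1 hU₀] at hcomm
    have c1 := of_mpow_comm hσ (by have := hα.2; have : 0 < 1 - α := by linarith
                                   positivity) hcomm
    have c2 := of_mpow_comm hρ₀ (by positivity) c1.symm
    obtain ⟨V, p, q, hp, hq⟩ := simul_diag hρ₀ hσ c2
    have hge : FazC (eigDown hρ.1) (eigUp hσ.1) α ≤ Faz (U₀ * ρ * star U₀) σ α z := by
      rw [Faz_spec hz0 hp hq (hp.pos hρ₀) (hq.pos hσ)]
      obtain ⟨τ, hτ⟩ := specForm_perm hσ.1 hq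
      have hp' := hp.conj (uni_star hU₀)
      have e : star U₀ * (U₀ * ρ * star U₀) * star (star U₀) = ρ := by
        rw [star_star]
        calc _ = (star U₀ * U₀) * ρ * (star U₀ * U₀) := by simp only [mul_assoc]
          _ = ρ := by rw [uni_sm hU₀, one_mul, mul_one]
      rw [e] at hp'
      obtain ⟨π, hπ⟩ := specForm_perm hρ.1 hp'
      rw [hτ, hπ]
      exact FazC_le hρ.eigenvalues_pos hσ.eigenvalues_pos hα π τ
    refine hge.trans ?_
    rw [hinv, hFaz _ hU₀, hFaz _ (uni_star hU)]
    refine Real.rpow_le_rpow ?_ (hmin _ (uni_star hU)) (by positivity)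
    have hX := bub_posDef hB (conj_posDef hR hU₀)
    rw [((specForm_eig hX.1).mpow z).trace, Complex.ofReal_re]
    exact Finset.sum_nonneg fun i _ => Real.rpow_nonneg (hX.eigenvalues_pos i).le _
end
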